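/- If a simple graph G contains no induced subgraph that is a cycle of length at least 4 with exactly one chord (i.e., G is 1-chord free), then for every pair of distinct vertices a, b, every minimal (a,b) vertex separator of G is an independent (stable) set. -/

import Mathlib

/-!
Suppose a minimal separator `S` contains adjacent vertices `u`, `v`. By minimality each of them
has a neighbour in the component `A` of `a` and in the component `B` of `b` in `G \ S`
(`exists_adj_side`). Hence there are `u`–`v` paths with nonempty interior inside `A`, and likewise
inside `B`; take a shortest one of each kind. A chord of a shortest path other than `uv` itself
would yield a shorter path (`exists_induced_path`). There are no edges between `A` and `B`, so the
two paths together form a cycle of length at least four whose only chord is `uv`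
(`isOneChordSet_of_paths`), contradicting that `G` is 1-chord free.
-/

/-- Reachability in `G` by a walk all of whose vertices avoid the set `S`
(i.e. reachability in the induced subgraph `G \ S`). -/
def ReachAvoid {V : Type*} (G : SimpleGraph V) (S : Set V) (x y : V) : Prop :=
  ∃ w : G.Walk x y, ∀ z ∈ w.support, z ∉ S

/-- `S` is an `(a,b)` vertex separator: `a, b ∉ S` and `a`, `b` lie in distinct
connected components of `G \ S`. -/
def IsABSeparator {V : Type*} (G : SimpleGraph V) (a b : V) (S : Set V) : Prop :=
  a ∉ S ∧ b ∉ S ∧ ¬ ReachAvoid G S a b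

/-- `S` is a minimal `(a,b)` vertex separator: it is one, and no proper subset is. -/
def IsMinABSeparator {V : Type*} (G : SimpleGraph V) (a b : V) (S : Set V) : Prop :=
  IsABSeparator G a b S ∧ ∀ S' ⊂ S, ¬ IsABSeparator G a b S'

/-- `S` is a stable (independent) set of vertices of `G`. -/
def IsStableSet {V : Type*} (G : SimpleGraph V) (S : Set V) : Prop :=
  ∀ u ∈ S, ∀ v ∈ S, ¬ G.Adj u v

/-- `W` induces a 1-chord subgraph of `G`: a cycle of length `n ≥ 4`
(vertices `f 0, f 1, …` in cyclic order) together with exactly one chord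
`{f i, f j}`, and no other edges among the vertices of `W` (induced). -/
def IsOneChordSet {V : Type*} (G : SimpleGraph V) (W : Set V) : Prop :=
  ∃ n : ℕ, 4 ≤ n ∧ ∃ f : ZMod n → V, Function.Injective f ∧ Set.range f = W ∧
    ∃ i j : ZMod n, j ≠ i ∧ j ≠ i + 1 ∧ i ≠ j + 1 ∧
      ∀ x y : ZMod n, G.Adj (f x) (f y) ↔
        ((y = x + 1 ∨ x = y + 1) ∨ (x = i ∧ y = j) ∨ (x = j ∧ y = i))

/-- `G` is 1-chord free: no induced cycle of length at least 4 with exactly one chord. -/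
def OneChordFree {V : Type*} (G : SimpleGraph V) : Prop :=
  ∀ W : Set V, ¬ IsOneChordSet G W

/-- `g 0, …, g p` is a walk from `u` to `v` of length `p ≥ 2` whose interior vertices lie
in `A`; the values `g k` for `k > p` are irrelevant. -/
def IsPathThrough {V : Type*} (G : SimpleGraph V) (A : Set V) (u v : V) (p : ℕ)
    (g : ℕ → V) : Prop :=
  2 ≤ p ∧ g 0 = u ∧ g p = v ∧ (∀ k, 0 < k → k < p → g k ∈ A) ∧ ∀ k < p, G.Adj (g k) (g (k + 1))

/-- The vertex set of the component of `a` in `G \ S` (empty if `a ∈ S`). -/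
def side {V : Type*} (G : SimpleGraph V) (S : Set V) (a : V) : Set V :=
  {x | ReachAvoid G S a x}

lemma ReachAvoid.symm {V : Type*} {G : SimpleGraph V} {S : Set V} {x y : V}
    (h : ReachAvoid G S x y) : ReachAvoid G S y x := by
  obtain ⟨w, hw⟩ := h
  exact ⟨w.reverse, by simpa using hw⟩

lemma ReachAvoid.trans {V : Type*} {G : SimpleGraph V} {S : Set V} {x y z : V}
    (h : ReachAvoid G S x y) (h' : ReachAvoid G S y z) : ReachAvoid G S x z := by
  obtain ⟨w, hw⟩ := h
  obtain ⟨w', hw'⟩ := h'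
  refine ⟨w.append w', fun t ht => ?_⟩
  rw [SimpleGraph.Walk.mem_support_append_iff] at ht
  exact ht.elim (hw t) (hw' t)

lemma ReachAvoid.right_notMem {V : Type*} {G : SimpleGraph V} {S : Set V} {x y : V}
    (h : ReachAvoid G S x y) : y ∉ S := by
  obtain ⟨w, hw⟩ := h
  exact hw y w.end_mem_support

lemma ReachAvoid.adj {V : Type*} {G : SimpleGraph V} {S : Set V} {x y z : V}
    (h : ReachAvoid G S x y) (hyz : G.Adj y z) (hz : z ∉ S) : ReachAvoid G S x z := by
  refine h.trans ⟨SimpleGraph.Walk.cons hyz SimpleGraph.Walk.nil, fun t ht => ?_⟩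
  have hy := h.right_notMem
  simp only [SimpleGraph.Walk.support_cons, SimpleGraph.Walk.support_nil, List.mem_cons,
    List.not_mem_nil, or_false] at ht
  rcases ht with rfl | rfl <;> assumption

lemma IsABSeparator.symm {V : Type*} {G : SimpleGraph V} {a b : V} {S : Set V}
    (h : IsABSeparator G a b S) : IsABSeparator G b a S :=
  ⟨h.2.1, h.1, fun hr => h.2.2 hr.symm⟩

lemma IsMinABSeparator.symm {V : Type*} {G : SimpleGraph V} {a b : V} {S : Set V}
    (h : IsMinABSeparator G a b S) : IsMinABSeparator G b a S :=
  ⟨h.1.symm, fun S' hS' hs => h.2 S' hS' hs.symm⟩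

/-- Removing `u` from the minimal separator `S` opens an `a`–`b` walk, and this walk can leave
the side of `a` only through `u`. -/
lemma exists_adj_side {V : Type*} {G : SimpleGraph V} {a b : V} {S : Set V}
    (h : IsMinABSeparator G a b S) {u : V} (hu : u ∈ S) : ∃ x ∈ side G S a, G.Adj u x := by
  obtain ⟨⟨ha, hb, hab⟩, hmin⟩ := h
  have hss : S \ {u} ⊂ S := Set.sdiff_singleton_ssubset.2 hu
  have hr : ReachAvoid G (S \ {u}) a b := by
    by_contra hr
    exact hmin _ hss ⟨fun h => ha h.1, fun h => hb h.1, hr⟩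
  obtain ⟨w, hw⟩ := hr
  have haA : a ∈ side G S a := ⟨SimpleGraph.Walk.nil, by simpa using ha⟩
  obtain ⟨d, hd, hd1, hd2⟩ := w.exists_boundary_dart (side G S a) haA hab
  have hsnd := hw d.snd (w.dart_snd_mem_support_of_mem_darts hd)
  have hdS : d.snd ∈ S := by
    by_contra hn
    exact hd2 (ReachAvoid.adj hd1 d.adj hn)
  have hdu : d.snd = u := by
    by_contra hn
    exact hsnd ⟨hdS, hn⟩
  exact ⟨d.fst, hd1, hdu ▸ d.adj.symm⟩

lemma exists_path_through {V : Type*} {G : SimpleGraph V} {a b : V} {S : Set V}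
    (h : IsMinABSeparator G a b S) {u v : V} (hu : u ∈ S) (hv : v ∈ S) :
    ∃ p g, IsPathThrough G (side G S a) u v p g := by
  obtain ⟨x, hx, hux⟩ := exists_adj_side h hu
  obtain ⟨y, hy, hvy⟩ := exists_adj_side h hv
  obtain ⟨w, hw⟩ := (ReachAvoid.symm hx).trans hy
  have hwA : ∀ k, w.getVert k ∈ side G S a := by
    intro k
    refine ReachAvoid.trans hx ⟨w.take k, fun z hz => hw z ?_⟩
    exact (w.isSubwalk_take k).support_subset hz
  refine ⟨w.length + 2, fun k => if k = 0 then u else if k ≤ w.length + 1 then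
    w.getVert (k - 1) else v, by omega, by simp, by simp, ?_, ?_⟩
  · intro k h0 hk
    have h1 : k ≠ 0 := by omega
    have h2 : k ≤ w.length + 1 := by omega
    simpa [h1, h2] using hwA _
  · intro k hk
    rcases Nat.eq_zero_or_pos k with rfl | h0
    · simpa using hux
    · have h1 : k ≠ 0 := by omega
      have h2 : k ≤ w.length + 1 := by omega
      by_cases h3 : k = w.length + 1
      · subst h3
        simpa using hvy.symm
      · have h4 : k ≤ w.length := by omega
        have := w.adj_getVert_succ (i := k - 1) (by omega)
        rw [Nat.sub_add_cancel h0] at this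
        simpa [h1, h2, h4] using this

/-- A shortest `u`–`v` path through `A` has no chord except possibly `uv`: any other chord could
be used as a shortcut that still passes through `A`. -/
lemma exists_induced_path {V : Type*} {G : SimpleGraph V} {A : Set V} {u v : V}
    (h : ∃ p g, IsPathThrough G A u v p g) :
    ∃ p g, IsPathThrough G A u v p g ∧
      ∀ i j, i < j → j ≤ p → G.Adj (g i) (g j) → j = i + 1 ∨ (i = 0 ∧ j = p) := by
  classical
  obtain ⟨g, hg⟩ := Nat.find_spec h
  refine ⟨Nat.find h, g, hg, fun i j hij hjp hadj => ?_⟩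
  have hmin := fun m (hm : m < Nat.find h) => Nat.find_min h hm
  generalize Nat.find h = p at *
  by_contra hcon
  obtain ⟨h2, h0, hp, hA, hG⟩ := hg
  refine hmin (p - (j - i - 1)) (by omega)
    ⟨fun k => if k ≤ i then g k else g (k + (j - i - 1)), by omega, by simpa using h0, ?_, ?_, ?_⟩
  · have h3 : ¬ p - (j - i - 1) ≤ i := by omega
    have h4 : p - (j - i - 1) + (j - i - 1) = p := by omega
    simp only [h3, if_false, h4, hp]
  · intro k hk hkp
    dsimp only
    split_ifs with h3
    · exact hA k hk (by omega)
    · exact hA _ (by omega) (by omega)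
  · intro k hk
    dsimp only
    rcases lt_trichotomy k i with h3 | h3 | h3
    · rw [if_pos (by omega), if_pos (by omega)]
      exact hG k (by omega)
    · subst h3
      rw [if_pos le_rfl, if_neg (by omega)]
      have h4 : k + 1 + (j - k - 1) = j := by omega
      rwa [h4]
    · rw [if_neg (by omega), if_neg (by omega)]
      have h4 : k + 1 + (j - i - 1) = k + (j - i - 1) + 1 := by omega
      rw [h4]
      exact hG _ (by omega)

/-- A walk through `A` with no chord except possibly `uv` repeats no vertex: if `g i = g j` for
interior positions `i < j`, then `g i` is adjacent to `g (j + 1)`, a forbidden chord. -/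
lemma path_ne {V : Type*} {G : SimpleGraph V} {A : Set V} {u v : V} {p : ℕ} {g : ℕ → V}
    (hg : IsPathThrough G A u v p g)
    (hc : ∀ i j, i < j → j ≤ p → G.Adj (g i) (g j) → j = i + 1 ∨ (i = 0 ∧ j = p))
    (hu : u ∉ A) (hv : v ∉ A) (huv : u ≠ v) {i j : ℕ} (hij : i < j) (hj : j ≤ p) :
    g i ≠ g j := by
  obtain ⟨h2, h0, hp, hA, hG⟩ := hg
  intro he
  rcases Nat.eq_zero_or_pos i with rfl | hi
  · rcases hj.lt_or_eq with hj | rfl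
    · exact hu (h0 ▸ he ▸ hA j hij hj)
    · exact huv (h0 ▸ hp ▸ he)
  · rcases hj.lt_or_eq with hj | rfl
    · have := hG j hj
      rw [← he] at this
      have := hc i (j + 1) (by omega) (by omega) this
      omega
    · exact hv (hp ▸ he ▸ hA i hi hij)

/-- Two induced `u`–`v` paths through disjoint, mutually nonadjacent sets close up to a cycle
whose only chord is `uv`. The cycle runs along `g` from `u` to `v` and back along `k`. -/
lemma isOneChordSet_of_paths {V : Type*} {G : SimpleGraph V} {A B : Set V} {u v : V} {p q : ℕ}
    {g k : ℕ → V} (huv : G.Adj u v) (huA : u ∉ A) (hvA : v ∉ A) (huB : u ∉ B) (hvB : v ∉ B)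
    (hAB : ∀ x ∈ A, ∀ y ∈ B, x ≠ y ∧ ¬ G.Adj x y)
    (hg : IsPathThrough G A u v p g)
    (hgc : ∀ i j, i < j → j ≤ p → G.Adj (g i) (g j) → j = i + 1 ∨ (i = 0 ∧ j = p))
    (hk : IsPathThrough G B u v q k)
    (hkc : ∀ i j, i < j → j ≤ q → G.Adj (k i) (k j) → j = i + 1 ∨ (i = 0 ∧ j = q)) :
    ∃ W, IsOneChordSet G W := by
  have hgne := fun i j => path_ne (i := i) (j := j) hg hgc huA hvA huv.ne
  have hkne := fun i j => path_ne (i := i) (j := j) hk hkc huB hvB huv.ne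
  obtain ⟨hp2, hg0, hgp, hgA, hgG⟩ := hg
  obtain ⟨hq2, hk0, hkq, hkB, hkG⟩ := hk
  obtain ⟨F, hF1, hF2⟩ : ∃ F : ℕ → V, (∀ t ≤ p, F t = g t) ∧
      ∀ t, p ≤ t → t < p + q → F t = k (p + q - t) := by
    refine ⟨fun t => if t ≤ p then g t else k (p + q - t), fun t ht => by simp [ht],
      fun t ht _ => ?_⟩
    rcases ht.lt_or_eq with ht | rfl
    · simp [ht]
    · simp [hgp, hkq]
  have hF0 : F 0 = k 0 := by rw [hF1 0 (by omega), hg0, hk0]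
  have hne : ∀ s t, s < t → t < p + q → F s ≠ F t := by
    intro s t hst ht
    by_cases h1 : t ≤ p
    · rw [hF1 s (by omega), hF1 t h1]
      exact hgne s t hst h1
    by_cases h2 : p ≤ s
    · rw [hF2 s h2 (by omega), hF2 t (by omega) ht]
      exact (hkne _ _ (by omega) (by omega)).symm
    rw [hF2 t (by omega) ht]
    rcases Nat.eq_zero_or_pos s with rfl | hs
    · rw [hF0]
      exact hkne _ _ (by omega) (by omega)
    · rw [hF1 s (by omega)]
      exact (hAB _ (hgA s hs (by omega)) _ (hkB _ (by omega) (by omega))).1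
  have hadj : ∀ s t, s < t → t < p + q →
      (G.Adj (F s) (F t) ↔ t = s + 1 ∨ (s = 0 ∧ t + 1 = p + q) ∨ (s = 0 ∧ t = p)) := by
    intro s t hst ht
    by_cases h1 : t ≤ p
    · rw [hF1 s (by omega), hF1 t h1]
      constructor
      · intro h
        have := hgc s t hst h1 h
        omega
      · rintro (rfl | h | ⟨rfl, rfl⟩)
        · exact hgG s (by omega)
        · omega
        · rwa [hg0, hgp]
    by_cases h2 : p ≤ s
    · rw [hF2 s h2 (by omega), hF2 t (by omega) ht]
      constructor
      · intro h
        have := hkc _ _ (by omega) (by omega) h.symm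
        omega
      · rintro (rfl | h | h)
        · have := hkG (p + q - (s + 1)) (by omega)
          have h3 : p + q - (s + 1) + 1 = p + q - s := by omega
          rw [h3] at this
          exact this.symm
        · omega
        · omega
    rw [hF2 t (by omega) ht]
    rcases Nat.eq_zero_or_pos s with rfl | hs
    · rw [hF0]
      constructor
      · intro h
        have := hkc _ _ (by omega) (by omega) h
        omega
      · rintro (h | ⟨-, h⟩ | h)
        · omega
        · have h3 : p + q - t = 0 + 1 := by omega
          rw [h3]
          exact hkG 0 (by omega)
        · omega
    · rw [hF1 s (by omega)]
      have := (hAB _ (hgA s hs (by omega)) _ (hkB (p + q - t) (by omega) (by omega))).2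
      constructor
      · intro h
        exact absurd h this
      · omega
  have : NeZero (p + q) := ⟨by omega⟩
  have : Fact (1 < p + q) := ⟨by omega⟩
  have hext : ∀ x y : ZMod (p + q), x = y ↔ x.val = y.val :=
    fun x y => (ZMod.val_injective (p + q)).eq_iff.symm
  have hsucc : ∀ x y : ZMod (p + q),
      y = x + 1 ↔ y.val = x.val + 1 ∨ (x.val + 1 = p + q ∧ y.val = 0) := by
    intro x y
    have hx := x.val_lt
    have hy := y.val_lt
    rw [hext, ZMod.val_add, ZMod.val_one]
    rcases (show x.val + 1 ≤ p + q from hx).lt_or_eq with h | h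
    · rw [Nat.mod_eq_of_lt h]
      omega
    · rw [h, Nat.mod_self]
      omega
  have hpv : ((p : ℕ) : ZMod (p + q)).val = p := ZMod.val_cast_of_lt (by omega)
  have h0v : (0 : ZMod (p + q)).val = 0 := ZMod.val_zero
  refine ⟨_, p + q, by omega, fun x => F x.val, ?_, rfl, 0, (p : ZMod (p + q)), ?_, ?_, ?_, ?_⟩
  · intro x y hxy
    rw [hext]
    rcases lt_trichotomy x.val y.val with h | h | h
    · exact absurd hxy (hne _ _ h y.val_lt)
    · exact h
    · exact absurd hxy.symm (hne _ _ h x.val_lt)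
  · rw [Ne, hext]
    omega
  · rw [Ne, hsucc]
    omega
  · rw [Ne, hsucc]
    omega
  · intro x y
    have hx := x.val_lt
    have hy := y.val_lt
    simp only [hsucc, hext, hpv, h0v]
    rcases lt_trichotomy x.val y.val with h | h | h
    · rw [hadj _ _ h hy]
      omega
    · rw [h]
      simp only [SimpleGraph.irrefl, false_iff]
      omega
    · rw [G.adj_comm, hadj _ _ h hx]
      omega

/-- If `G` is 1-chord free then every minimal `(a,b)` vertex
separator of `G` is a stable set. -/
theorem stmt_1 {V : Type*} [Fintype V] (G : SimpleGraph V) (h : OneChordFree G) :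
    ∀ a b : V, a ≠ b → ∀ S : Set V, IsMinABSeparator G a b S → IsStableSet G S := by
  intro a b _ S hS u hu v hv huv
  obtain ⟨p, g, hg, hgc⟩ := exists_induced_path (exists_path_through hS hu hv)
  obtain ⟨q, k, hk, hkc⟩ := exists_induced_path (exists_path_through hS.symm hu hv)
  have hside : ∀ c, ∀ x ∈ S, x ∉ side G S c := fun c x hx hc => ReachAvoid.right_notMem hc hx
  have hAB : ∀ x ∈ side G S a, ∀ y ∈ side G S b, x ≠ y ∧ ¬ G.Adj x y := by
    refine fun x hx y hy => ⟨?_, fun hxy => ?_⟩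
    · rintro rfl
      exact hS.1.2.2 (ReachAvoid.trans hx (ReachAvoid.symm hy))
    · exact hS.1.2.2 ((ReachAvoid.adj hx hxy (ReachAvoid.right_notMem hy)).trans
        (ReachAvoid.symm hy))
  obtain ⟨W, hW⟩ := isOneChordSet_of_paths huv (hside a u hu) (hside a v hv) (hside b u hu)
    (hside b v hv) hAB hg hgc hk hkc
  exact h W hW
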